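/- Let Φ be a positive linear map from n×n to m×m complex matrices that moreover maps positive definite matrices to positive definite matrices, let f : ℝ → ℝ be operator monotone on [0,∞) with f(x) > 0 for x > 0, and let A, B be positive definite n×n complex matrices with s·A ≤ B ≤ t·A for some scalars 0 < s ≤ t with s·t ≥ 1. Then Φ(f(A)) ♯ Φ(f(B)) ≤ ((√s+√t)/2)²·Φ(f(A ♯ B)). -/

import Mathlib

open Matrix ComplexOrder

/-- Loewner order: `A ≤ B` iff `B - A` is positive semidefinite. -/
def LoewnerLE {n : Type} [Fintype n] (A B : Matrix n n ℂ) : Prop := (B - A).PosSemidef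

/-- The positive square root of a (Hermitian) matrix, via the continuous functional calculus. -/
noncomputable def msqrt {n : Type} [Fintype n] [DecidableEq n] (A : Matrix n n ℂ) :
    Matrix n n ℂ := cfc Real.sqrt A

/-- The arithmetic mean `A ∇ B = (A + B)/2`. -/
noncomputable def amean {n : Type} [Fintype n] [DecidableEq n] (A B : Matrix n n ℂ) :
    Matrix n n ℂ := (2 : ℝ)⁻¹ • (A + B)

/-- The harmonic mean `A ! B = ((A⁻¹ + B⁻¹)/2)⁻¹`. -/
noncomputable def hmean {n : Type} [Fintype n] [DecidableEq n] (A B : Matrix n n ℂ) :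
    Matrix n n ℂ := ((2 : ℝ)⁻¹ • (A⁻¹ + B⁻¹))⁻¹

/-- The geometric mean `A ♯ B = A^(1/2) (A^(-1/2) B A^(-1/2))^(1/2) A^(1/2)`. -/
noncomputable def gmean {n : Type} [Fintype n] [DecidableEq n] (A B : Matrix n n ℂ) :
    Matrix n n ℂ := msqrt A * msqrt ((msqrt A)⁻¹ * B * (msqrt A)⁻¹) * msqrt A

/-- `f : ℝ → ℝ` is operator monotone on `[0,∞)`: it is continuous and nonnegative on `[0,∞)`
and monotone on positive-semidefinite complex matrices of every finite size, with `f` applied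
via the continuous functional calculus. -/
def OpMonotone (f : ℝ → ℝ) : Prop :=
  ContinuousOn f (Set.Ici 0) ∧ (∀ x : ℝ, 0 ≤ x → 0 ≤ f x) ∧
    ∀ (k : Type) [Fintype k] [DecidableEq k] (X Y : Matrix k k ℂ),
      X.PosSemidef → LoewnerLE X Y → LoewnerLE (cfc f X) (cfc f Y)

/-- `g : ℝ → ℝ` is operator monotone decreasing on `(0,∞)`: it is continuous and nonnegative on
`(0,∞)` and antitone on positive-definite complex matrices of every finite size, with `g` applied
via the continuous functional calculus. -/
def OpAntitone (g : ℝ → ℝ) : Prop :=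
  ContinuousOn g (Set.Ioi 0) ∧ (∀ x : ℝ, 0 < x → 0 ≤ g x) ∧
    ∀ (k : Type) [Fintype k] [DecidableEq k] (X Y : Matrix k k ℂ),
      X.PosDef → Y.PosDef → LoewnerLE X Y → LoewnerLE (cfc g Y) (cfc g X)

/-!
Put `c = (√s + √t) / 2`, which is at least `1` since `√s * √t ≥ 1`. Conjugating by `A^(-1/2)`
reduces inequalities between means of `A` and `B` to scalar ones on `[s, t]`; there
`(√x - √s) * (√t - √x) ≥ 0` gives `(1 + x) / 2 ≤ c * √x`, the reverse AM-GM inequality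
`A ∇ B ≤ c (A ♯ B)`. An operator monotone `f` is operator concave, by Hansen's inequality
`Vᴴ f(X) V ≤ f(Vᴴ X V)` for isometries `V`, and hence also `f(c X) ≤ c f(X)`. Therefore
`Φ(f(A)) ♯ Φ(f(B)) ≤ Φ(f(A) ∇ f(B)) ≤ Φ(f(A ∇ B)) ≤ Φ(f(c (A ♯ B))) ≤ c Φ(f(A ♯ B))`,
with the constant `c` in place of `c²`.
-/

-- `LoewnerLE` unfolds to the order `≤` of this scope, so that one can be used for the other.
open scoped MatrixOrder

lemma posSemidef_fromBlocks_zero_zero {𝕜 m n : Type*} [RCLike 𝕜] [Finite m] [Finite n]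
    {A : Matrix m m 𝕜} {B : Matrix n n 𝕜} (hA : A.PosSemidef) (hB : B.PosSemidef) :
    (fromBlocks A 0 0 B).PosSemidef := by
  classical
  have := Fintype.ofFinite m
  have := Fintype.ofFinite n
  let inl : Matrix (m ⊕ n) m 𝕜 := fromRows 1 0
  let inr : Matrix (m ⊕ n) n 𝕜 := fromRows 0 1
  have decomposition : fromBlocks A 0 0 B = inl * A * inlᴴ + inr * B * inrᴴ := by
    ext (_ | _) (_ | _) <;>
      simp [inl, inr, fromRows_mul, conjTranspose_fromRows_eq_fromCols_conjTranspose]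
  rw [decomposition]
  exact (hA.mul_mul_conjTranspose_same inl).add (hB.mul_mul_conjTranspose_same inr)

section FunctionalCalculus

lemma continuousOn_cfc_Ici_zero {A : Type*} [CStarAlgebra A] [PartialOrder A] [StarOrderedRing A]
    {f : ℝ → ℝ} (hf : ContinuousOn f (Set.Ici 0)) :
    ContinuousOn (cfc f) (Set.Ici (0 : A)) := by
  intro X₀ hX₀
  let r := (‖X₀‖ + 1) * ‖(1 : A)‖
  have spectrum_subset {X : A} (hX : 0 ≤ X) (hnorm : ‖X‖ ≤ ‖X₀‖ + 1) :
      spectrum ℝ X ⊆ Set.Icc 0 r := fun x hx ↦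
    ⟨spectrum_nonneg_of_nonneg hX hx, (le_abs_self x).trans <|
      (spectrum.norm_le_norm_mul_of_mem hx).trans
        (mul_le_mul_of_nonneg_right hnorm (norm_nonneg _))⟩
  have norm_le : ∀ᶠ X in nhdsWithin X₀ (Set.Ici 0), ‖X‖ ≤ ‖X₀‖ + 1 :=
    (continuous_norm.continuousWithinAt.eventually_lt_const (lt_add_one _)).mono fun _ ↦ le_of_lt
  refine continuousWithinAt_id.cfc (isCompact_Icc (a := 0) (b := r)) f hX₀ ?_ ?_
    (hf.mono Set.Icc_subset_Ici_self)
  · filter_upwards [norm_le, self_mem_nhdsWithin] with X hnorm hX using spectrum_subset hX hnorm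
  · filter_upwards [self_mem_nhdsWithin] with X hX using IsSelfAdjoint.of_nonneg hX

variable {𝕜 m n : Type*} [RCLike 𝕜] [Fintype m] [DecidableEq m] [Fintype n] [DecidableEq n]

lemma aeval_mul_eq_mul_aeval {R S : Type*} [CommSemiring R] [Semiring S] [Algebra R S]
    {X : Matrix m m S} {Y : Matrix n n S} {V : Matrix m n S} (h : X * V = V * Y)
    (p : Polynomial R) : p.aeval X * V = V * p.aeval Y := by
  induction p using Polynomial.induction_on' with
  | add p q hp hq => simp only [map_add, Matrix.add_mul, Matrix.mul_add, hp, hq]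
  | monomial i a =>
    have pow_mul_eq : X ^ i * V = V * Y ^ i := by
      induction i with
      | zero => simp only [pow_zero, Matrix.one_mul, Matrix.mul_one]
      | succ i ih =>
        rw [pow_succ, Matrix.mul_assoc, h, ← Matrix.mul_assoc, ih, Matrix.mul_assoc, ← pow_succ]
    simp only [Polynomial.aeval_monomial, ← Algebra.smul_def, smul_mul, pow_mul_eq, Matrix.mul_smul]

lemma exists_polynomial_eqOn_of_finite {F : Type*} [Field F] (f : F → F) {S : Set F}
    (hS : S.Finite) : ∃ p : Polynomial F, S.EqOn f p.eval := by
  classical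
  exact ⟨Lagrange.interpolate hS.toFinset id f, fun x hx ↦
    (Lagrange.eval_interpolate_at_node (v := id) f Function.injective_id.injOn
      (hS.mem_toFinset.mpr hx)).symm⟩

lemma cfc_mul_eq_mul_cfc (f : ℝ → ℝ) {X : Matrix m m 𝕜} {Y : Matrix n n 𝕜} {V : Matrix m n 𝕜}
    (hX : X.IsHermitian) (hY : Y.IsHermitian) (h : X * V = V * Y) :
    cfc f X * V = V * cfc f Y := by
  obtain ⟨p, hp⟩ := exists_polynomial_eqOn_of_finite f
    (X.finite_real_spectrum.union Y.finite_real_spectrum)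
  rw [cfc_congr (hp.mono Set.subset_union_left), cfc_congr (hp.mono Set.subset_union_right),
    cfc_polynomial p X hX.isSelfAdjoint, cfc_polynomial p Y hY.isSelfAdjoint,
    aeval_mul_eq_mul_aeval h]

lemma cfc_fromBlocks_zero_zero (f : ℝ → ℝ) {A : Matrix m m 𝕜} {B : Matrix n n 𝕜}
    (hA : A.IsHermitian) (hB : B.IsHermitian) :
    cfc f (fromBlocks A 0 0 B) = fromBlocks (cfc f A) 0 0 (cfc f B) := by
  have hAB : (fromBlocks A 0 0 B).IsHermitian := hA.fromBlocks (conjTranspose_zero ..) hB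
  let inl : Matrix (m ⊕ n) m 𝕜 := fromRows 1 0
  let inr : Matrix (m ⊕ n) n 𝕜 := fromRows 0 1
  have hinl : cfc f (fromBlocks A 0 0 B) * inl = inl * cfc f A :=
    cfc_mul_eq_mul_cfc f hAB hA (by simp [inl, fromBlocks_mul_fromRows, fromRows_mul])
  have hinr : cfc f (fromBlocks A 0 0 B) * inr = inr * cfc f B :=
    cfc_mul_eq_mul_cfc f hAB hB (by simp [inr, fromBlocks_mul_fromRows, fromRows_mul])
  calc cfc f (fromBlocks A 0 0 B)
      = cfc f (fromBlocks A 0 0 B) * fromCols inl inr := by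
        rw [fromCols_fromRows_eq_fromBlocks, fromBlocks_one, Matrix.mul_one]
    _ = fromCols (inl * cfc f A) (inr * cfc f B) := by rw [mul_fromCols, hinl, hinr]
    _ = fromBlocks (cfc f A) 0 0 (cfc f B) := by
        simp only [inl, inr, fromRows_mul, Matrix.one_mul, Matrix.zero_mul,
          fromCols_fromRows_eq_fromBlocks]

lemma posDef_cfc {f : ℝ → ℝ} (hf : ∀ x : ℝ, 0 < x → 0 < f x) {X : Matrix n n 𝕜}
    (hX : X.PosDef) : (cfc f X).PosDef := by
  rw [← isStrictlyPositive_iff_posDef] at hX ⊢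
  rw [cfc_isStrictlyPositive_iff f X (X.finite_real_spectrum.continuousOn _)]
  exact fun x hx ↦ hf x (hX.spectrum_pos hx)

end FunctionalCalculus

namespace OpMonotone

variable {f : ℝ → ℝ} {k l : Type} [Fintype k] [DecidableEq k] [Fintype l] [DecidableEq l]

lemma cfc_le_cfc (hf : OpMonotone f) {X Y : Matrix k k ℂ} (hX : 0 ≤ X) (hXY : X ≤ Y) :
    cfc f X ≤ cfc f Y :=
  hf.2.2 k X Y (nonneg_iff_posSemidef.mp hX) hXY

lemma cfc_nonneg (hf : OpMonotone f) {X : Matrix k k ℂ} (hX : 0 ≤ X) : 0 ≤ cfc f X :=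
  _root_.cfc_nonneg fun _ hx ↦ hf.2.1 _ (spectrum_nonneg_of_nonneg hX hx)

lemma conjTranspose_mul_cfc_mul_le_cfc_add_smul_one (hf : OpMonotone f) {X : Matrix k k ℂ}
    (hX : 0 ≤ X) {V : Matrix k l ℂ} (hV : Vᴴ * V = 1) {ε : ℝ} (hε : 0 < ε) :
    Vᴴ * cfc f X * V ≤ cfc f (Vᴴ * X * V + ε • 1) := by
  have hXh : Xᴴ = X := (nonneg_iff_posSemidef.mp hX).1
  let W := X * V - V * (Vᴴ * X * V)
  have hWV : Wᴴ * V = 0 := by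
    simp only [W, conjTranspose_sub, conjTranspose_mul, conjTranspose_conjTranspose, hXh,
      Matrix.sub_mul, Matrix.mul_assoc, hV, Matrix.mul_one, sub_self]
  -- `X ≤ Y` only adds a positive term, chosen so that the range of `V` is invariant under `Y`:
  -- on it, `Zᴴ * Z` cancels the off-diagonal part `W` of `X`, at the price of `ε` on the diagonal.
  let Z := ε • Vᴴ - Wᴴ
  have hZV : Z * V = ε • 1 := by simp only [Z, Matrix.sub_mul, smul_mul, hV, hWV, sub_zero]
  let Y := X + ε⁻¹ • (Zᴴ * Z)
  have hXY : X ≤ Y := le_add_of_nonneg_right <|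
    ((posSemidef_conjTranspose_mul_self Z).smul (inv_nonneg.mpr hε.le)).nonneg
  have hYV : Y * V = V * (Vᴴ * X * V + ε • 1) := by
    have hZ : Zᴴ = ε • V - W := by simp [Z]
    simp only [Y, Matrix.add_mul, smul_mul, Matrix.mul_assoc, hZV, Matrix.mul_smul,
      Matrix.mul_one, smul_smul, inv_mul_cancel₀ hε.ne', one_smul, hZ, W, Matrix.mul_add]
    abel
  have hYh : Y.IsHermitian := (nonneg_iff_posSemidef.mp (hX.trans hXY)).1
  have hVXV : (Vᴴ * X * V + ε • 1).IsHermitian :=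
    (isHermitian_conjTranspose_mul_mul V hXh).add (isHermitian_one.smul (.all ε))
  calc Vᴴ * cfc f X * V ≤ Vᴴ * cfc f Y * V := by
        rw [Matrix.le_iff, ← Matrix.sub_mul, ← Matrix.mul_sub]
        exact (hf.cfc_le_cfc hX hXY).conjTranspose_mul_mul_same V
    _ = cfc f (Vᴴ * X * V + ε • 1) := by
        rw [Matrix.mul_assoc, cfc_mul_eq_mul_cfc f hYh hVXV hYV, ← Matrix.mul_assoc, hV,
          Matrix.one_mul]

open scoped Topology Matrix.Norms.L2Operator in
lemma conjTranspose_mul_cfc_mul_le (hf : OpMonotone f) {X : Matrix k k ℂ} (hX : 0 ≤ X)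
    {V : Matrix k l ℂ} (hV : Vᴴ * V = 1) : Vᴴ * cfc f X * V ≤ cfc f (Vᴴ * X * V) := by
  have hP : 0 ≤ Vᴴ * X * V :=
    ((nonneg_iff_posSemidef.mp hX).conjTranspose_mul_mul_same V).nonneg
  have hlim : Filter.Tendsto (fun ε : ℝ ↦ Vᴴ * X * V + ε • 1) (𝓝[>] 0)
      (𝓝[Set.Ici 0] (Vᴴ * X * V)) := by
    have hcont : Continuous fun ε : ℝ ↦ Vᴴ * X * V + ε • 1 := by fun_prop
    refine tendsto_nhdsWithin_iff.mpr
      ⟨(hcont.tendsto' 0 _ (by simp)).mono_left nhdsWithin_le_nhds, ?_⟩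
    filter_upwards [self_mem_nhdsWithin] with ε hε
    exact add_nonneg hP (smul_nonneg (Set.mem_Ioi.mp hε).le zero_le_one)
  refine ge_of_tendsto ((continuousOn_cfc_Ici_zero hf.1 _ hP).tendsto.comp hlim) ?_
  filter_upwards [self_mem_nhdsWithin] with ε hε
    using hf.conjTranspose_mul_cfc_mul_le_cfc_add_smul_one hX hV hε

theorem concaveOn_cfc (hf : OpMonotone f) : ConcaveOn ℝ (Set.Ici (0 : Matrix k k ℂ)) (cfc f) := by
  refine ⟨convex_Ici 0, fun A hA B hB a b ha hb hab ↦ ?_⟩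
  rw [Set.mem_Ici, nonneg_iff_posSemidef] at hA hB
  let V : Matrix (k ⊕ k) k ℂ := fromRows (√a • 1) (√b • 1)
  have conj_V (P Q : Matrix k k ℂ) : Vᴴ * fromBlocks P 0 0 Q * V = a • P + b • Q := by
    simp [V, conjTranspose_fromRows_eq_fromCols_conjTranspose, fromCols_mul_fromBlocks,
      fromCols_mul_fromRows, smul_smul, Real.mul_self_sqrt, ha, hb]
  have hV : Vᴴ * V = 1 := by simpa [← add_smul, hab] using conj_V 1 1
  simpa only [cfc_fromBlocks_zero_zero f hA.1 hB.1, conj_V] using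
    hf.conjTranspose_mul_cfc_mul_le (posSemidef_fromBlocks_zero_zero hA hB).nonneg hV

lemma cfc_smul_le (hf : OpMonotone f) {X : Matrix k k ℂ} (hX : 0 ≤ X) {c : ℝ} (hc : 1 ≤ c) :
    cfc f (c • X) ≤ c • cfc f X := by
  have hc₀ : 0 < c := zero_lt_one.trans_le hc
  have hc₁ : 0 ≤ 1 - c⁻¹ := sub_nonneg.mpr (inv_le_one_of_one_le₀ hc)
  rw [← inv_smul_le_iff_of_pos hc₀]
  calc c⁻¹ • cfc f (c • X)
      ≤ c⁻¹ • cfc f (c • X) + (1 - c⁻¹) • cfc f 0 :=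
        le_add_of_nonneg_right (smul_nonneg hc₁ (hf.cfc_nonneg le_rfl))
    _ ≤ cfc f (c⁻¹ • c • X + (1 - c⁻¹) • 0) :=
        hf.concaveOn_cfc.2 (smul_nonneg hc₀.le hX) Set.self_mem_Ici (inv_nonneg.mpr hc₀.le) hc₁
          (add_sub_cancel ..)
    _ = cfc f X := by rw [smul_zero, add_zero, inv_smul_smul₀ hc₀.ne']

end OpMonotone

section Means

variable {n : Type} [Fintype n] [DecidableEq n] {A B : Matrix n n ℂ}

lemma isSelfAdjoint_msqrt (A : Matrix n n ℂ) : IsSelfAdjoint (msqrt A) := cfc_predicate _ A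

lemma isSelfAdjoint_inv_msqrt (A : Matrix n n ℂ) : IsSelfAdjoint (msqrt A)⁻¹ :=
  (isSelfAdjoint_msqrt A).isHermitian.inv.isSelfAdjoint

lemma msqrt_mul_self (hA : 0 ≤ A) : msqrt A * msqrt A = A := by
  rw [msqrt, ← cfc_mul Real.sqrt Real.sqrt A]
  calc cfc (fun x ↦ √x * √x) A = cfc id A :=
        cfc_congr fun x hx ↦ Real.mul_self_sqrt (spectrum_nonneg_of_nonneg hA hx)
    _ = A := cfc_id ℝ A

lemma isUnit_msqrt (hA : A.PosDef) : IsUnit (msqrt A) :=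
  isUnit_of_mul_isUnit_left (msqrt_mul_self hA.posSemidef.nonneg ▸ hA.isUnit)

/-- The matrix `A^(-1/2) B A^(-1/2)`: for positive definite `A`, the matrix `B` seen in the
coordinates in which `A` becomes the identity. -/
noncomputable def relative (A B : Matrix n n ℂ) : Matrix n n ℂ :=
  (msqrt A)⁻¹ * B * (msqrt A)⁻¹

/-- The noncommutative perspective `A^(1/2) h(A^(-1/2) B A^(-1/2)) A^(1/2)` of `h`. The
Kubo–Ando means arise in this way, `h = √` giving `gmean` and `h x = (1 + x) / 2` giving `amean`,
so that inequalities between means reduce to scalar ones. -/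
noncomputable def perspective (h : ℝ → ℝ) (A B : Matrix n n ℂ) : Matrix n n ℂ :=
  msqrt A * cfc h (relative A B) * msqrt A

lemma isSelfAdjoint_relative (hB : IsSelfAdjoint B) : IsSelfAdjoint (relative A B) := by
  simpa only [relative, (isSelfAdjoint_inv_msqrt A).star_eq] using hB.conjugate (msqrt A)⁻¹

lemma relative_nonneg (hB : 0 ≤ B) : 0 ≤ relative A B :=
  (isSelfAdjoint_inv_msqrt A).conjugate_nonneg hB

lemma relative_mono_right {B' : Matrix n n ℂ} (h : B ≤ B') : relative A B ≤ relative A B' :=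
  (isSelfAdjoint_inv_msqrt A).conjugate_le_conjugate h

lemma relative_smul_self (hA : A.PosDef) (c : ℝ) : relative A (c • A) = algebraMap ℝ _ c := by
  have hS := (isUnit_iff_isUnit_det _).mp (isUnit_msqrt hA)
  calc relative A (c • A) = c • ((msqrt A)⁻¹ * (msqrt A * msqrt A) * (msqrt A)⁻¹) := by
        rw [msqrt_mul_self hA.posSemidef.nonneg, relative, Matrix.mul_smul, smul_mul]
    _ = algebraMap ℝ _ c := by
        rw [nonsing_inv_mul_cancel_left _ _ hS, mul_nonsing_inv _ hS,
          Algebra.algebraMap_eq_smul_one]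

lemma spectrum_relative_subset_Icc (hA : A.PosDef) {s t : ℝ} (hsA : s • A ≤ B) (htA : B ≤ t • A) :
    spectrum ℝ (relative A B) ⊆ Set.Icc s t := by
  have hs : algebraMap ℝ _ s ≤ relative A B := relative_smul_self hA s ▸ relative_mono_right hsA
  have ht : relative A B ≤ algebraMap ℝ _ t := relative_smul_self hA t ▸ relative_mono_right htA
  have hR : IsSelfAdjoint (relative A B) := .of_ge hs (.algebraMap _ (.all s))
  exact fun x hx ↦ ⟨(algebraMap_le_iff_le_spectrum hR).mp hs x hx,
    (le_algebraMap_iff_spectrum_le hR).mp ht x hx⟩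

lemma perspective_mono {g h : ℝ → ℝ} (hgh : ∀ x ∈ spectrum ℝ (relative A B), g x ≤ h x) :
    perspective g A B ≤ perspective h A B :=
  (isSelfAdjoint_msqrt A).conjugate_le_conjugate <| cfc_mono hgh
    ((relative A B).finite_real_spectrum.continuousOn _)
    ((relative A B).finite_real_spectrum.continuousOn _)

lemma perspective_const_mul (h : ℝ → ℝ) (c : ℝ) (A B : Matrix n n ℂ) :
    perspective (fun x ↦ c * h x) A B = c • perspective h A B := by
  rw [perspective, cfc_const_mul c h _ ((relative A B).finite_real_spectrum.continuousOn _),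
    Matrix.mul_smul, smul_mul, perspective]

lemma perspective_sqrt (A B : Matrix n n ℂ) : perspective Real.sqrt A B = gmean A B := rfl

lemma perspective_two_inv_mul_one_add (hA : A.PosDef) (hB : IsSelfAdjoint B) :
    perspective (fun x ↦ 2⁻¹ * (1 + x)) A B = amean A B := by
  have hS := (isUnit_iff_isUnit_det _).mp (isUnit_msqrt hA)
  have hR : IsSelfAdjoint (relative A B) := isSelfAdjoint_relative hB
  have conj_relative : msqrt A * relative A B * msqrt A = B := by
    rw [relative, ← Matrix.mul_assoc, ← Matrix.mul_assoc, mul_nonsing_inv _ hS, Matrix.one_mul,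
      nonsing_inv_mul_cancel_right _ _ hS]
  rw [perspective_const_mul (fun x ↦ 1 + x), perspective,
    cfc_const_add 1 (fun x ↦ x) (relative A B), cfc_id' ℝ (relative A B), map_one,
    Matrix.mul_add, Matrix.mul_one, Matrix.add_mul, msqrt_mul_self hA.posSemidef.nonneg,
    conj_relative, amean]

lemma amean_nonneg (hA : 0 ≤ A) (hB : 0 ≤ B) : 0 ≤ amean A B :=
  smul_nonneg (by norm_num) (add_nonneg hA hB)

lemma OpMonotone.amean_cfc_le {f : ℝ → ℝ} (hf : OpMonotone f) (hA : 0 ≤ A) (hB : 0 ≤ B) :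
    amean (cfc f A) (cfc f B) ≤ cfc f (amean A B) := by
  have half_nonneg : (0 : ℝ) ≤ 2⁻¹ := by positivity
  have h := hf.concaveOn_cfc.2 hA hB half_nonneg half_nonneg (by norm_num)
  simpa only [amean, smul_add] using h

lemma gmean_nonneg (A B : Matrix n n ℂ) : 0 ≤ gmean A B :=
  (isSelfAdjoint_msqrt A).conjugate_nonneg (cfc_nonneg fun _ _ ↦ Real.sqrt_nonneg _)

lemma gmean_le_amean (hA : A.PosDef) (hB : 0 ≤ B) : gmean A B ≤ amean A B := by
  rw [← perspective_sqrt, ← perspective_two_inv_mul_one_add hA (.of_nonneg hB)]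
  refine perspective_mono fun x hx ↦ ?_
  have hx₀ : 0 ≤ x := spectrum_nonneg_of_nonneg (relative_nonneg hB) hx
  nlinarith [sq_nonneg (√x - 1), Real.sq_sqrt hx₀]

lemma two_inv_mul_one_add_le_mul_sqrt {s t x : ℝ} (hs : 0 ≤ s) (h1 : 1 ≤ s * t)
    (hx : x ∈ Set.Icc s t) : 2⁻¹ * (1 + x) ≤ (√s + √t) / 2 * √x := by
  have hsx : √s ≤ √x := Real.sqrt_le_sqrt hx.1
  have hxt : √x ≤ √t := Real.sqrt_le_sqrt hx.2
  have hst : 1 ≤ √s * √t := by rwa [← Real.sqrt_mul hs, Real.one_le_sqrt]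
  nlinarith [mul_nonneg (sub_nonneg.mpr hsx) (sub_nonneg.mpr hxt), Real.sq_sqrt (hs.trans hx.1)]

lemma amean_le_smul_gmean (hA : A.PosDef) {s t : ℝ} (hs : 0 ≤ s) (h1 : 1 ≤ s * t)
    (hsA : s • A ≤ B) (htA : B ≤ t • A) : amean A B ≤ ((√s + √t) / 2) • gmean A B := by
  have hB : IsSelfAdjoint B := .of_nonneg ((smul_nonneg hs hA.posSemidef.nonneg).trans hsA)
  rw [← perspective_two_inv_mul_one_add hA hB, ← perspective_sqrt, ← perspective_const_mul]
  exact perspective_mono fun x hx ↦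
    two_inv_mul_one_add_le_mul_sqrt hs h1 (spectrum_relative_subset_Icc hA hsA htA hx)

end Means

lemma one_le_sqrt_add_sqrt_div_two {s t : ℝ} (hs : 0 ≤ s) (h1 : 1 ≤ s * t) :
    1 ≤ (√s + √t) / 2 := by
  have hst : 1 ≤ √s * √t := by rwa [← Real.sqrt_mul hs, Real.one_le_sqrt]
  nlinarith [sq_nonneg (√s - √t), Real.sqrt_nonneg s, Real.sqrt_nonneg t]

theorem polya_szego_monotone_geom_st_ge_one_general {n m : Type} [Fintype n] [DecidableEq n]
    [Fintype m] [DecidableEq m] (Φ : Matrix n n ℂ →ₗ[ℝ] Matrix m m ℂ)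
    (hΦ : ∀ X : Matrix n n ℂ, X.PosSemidef → (Φ X).PosSemidef)
    (hΦ' : ∀ X : Matrix n n ℂ, X.PosDef → (Φ X).PosDef)
    (f : ℝ → ℝ) (hf : OpMonotone f) (hf' : ∀ x : ℝ, 0 < x → 0 < f x)
    (A B : Matrix n n ℂ) (hA : A.PosDef) (s t : ℝ) (hs : 0 ≤ s) (h1 : 1 ≤ s * t)
    (hsA : s • A ≤ B) (htA : B ≤ t • A) :
    gmean (Φ (cfc f A)) (Φ (cfc f B)) ≤ ((√s + √t) / 2) • Φ (cfc f (gmean A B)) := by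
  have Φ_nonneg {X : Matrix n n ℂ} (hX : 0 ≤ X) : 0 ≤ Φ X :=
    (hΦ X (nonneg_iff_posSemidef.mp hX)).nonneg
  have Φ_mono {X Y : Matrix n n ℂ} (h : X ≤ Y) : Φ X ≤ Φ Y := by
    simpa using Φ_nonneg (sub_nonneg.mpr h)
  have hA₀ : 0 ≤ A := hA.posSemidef.nonneg
  have hB₀ : 0 ≤ B := (smul_nonneg hs hA₀).trans hsA
  have hc : 1 ≤ (√s + √t) / 2 := one_le_sqrt_add_sqrt_div_two hs h1
  calc gmean (Φ (cfc f A)) (Φ (cfc f B))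
      ≤ amean (Φ (cfc f A)) (Φ (cfc f B)) :=
        gmean_le_amean (hΦ' _ (posDef_cfc hf' hA)) (Φ_nonneg (hf.cfc_nonneg hB₀))
    _ = Φ (amean (cfc f A) (cfc f B)) := by rw [amean, amean, map_smul, map_add]
    _ ≤ Φ (cfc f (amean A B)) := Φ_mono (hf.amean_cfc_le hA₀ hB₀)
    _ ≤ Φ (cfc f (((√s + √t) / 2) • gmean A B)) := Φ_mono <|
        hf.cfc_le_cfc (amean_nonneg hA₀ hB₀) (amean_le_smul_gmean hA hs h1 hsA htA)
    _ ≤ Φ (((√s + √t) / 2) • cfc f (gmean A B)) :=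
        Φ_mono (hf.cfc_smul_le (gmean_nonneg A B) hc)
    _ = ((√s + √t) / 2) • Φ (cfc f (gmean A B)) := map_smul ..

theorem polya_szego_monotone_geom_st_ge_one {n m : Type} [Fintype n] [DecidableEq n] [Fintype m] [DecidableEq m]
    (Φ : Matrix n n ℂ →ₗ[ℂ] Matrix m m ℂ)
    (hΦ : ∀ X : Matrix n n ℂ, X.PosSemidef → (Φ X).PosSemidef)
    (hΦ' : ∀ X : Matrix n n ℂ, X.PosDef → (Φ X).PosDef)
    (f : ℝ → ℝ) (hf : OpMonotone f) (hf' : ∀ x : ℝ, 0 < x → 0 < f x)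
    (A B : Matrix n n ℂ) (hA : A.PosDef) (hB : B.PosDef)
    (s t : ℝ) (hs : 0 < s) (hst : s ≤ t) (h1 : 1 ≤ s * t)
    (hsA : LoewnerLE (s • A) B) (htA : LoewnerLE B (t • A)) :
    LoewnerLE (gmean (Φ (cfc f A)) (Φ (cfc f B)))
      ((((Real.sqrt s + Real.sqrt t) / 2) ^ 2) • Φ (cfc f (gmean A B))) := by
  have nonneg : 0 ≤ Φ (cfc f (gmean A B)) :=
    (hΦ _ (nonneg_iff_posSemidef.mp (hf.cfc_nonneg (gmean_nonneg A B)))).nonneg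
  have const_le_sq : (√s + √t) / 2 ≤ ((√s + √t) / 2) ^ 2 :=
    le_self_pow₀ (one_le_sqrt_add_sqrt_div_two hs.le h1) two_ne_zero
  exact (polya_szego_monotone_geom_st_ge_one_general (Φ.restrictScalars ℝ) hΦ hΦ' f hf hf' A B hA
    s t hs.le h1 hsA htA).trans (smul_le_smul_of_nonneg_right const_le_sq nonneg)
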